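/- For every real number y and every natural number n, |sin y − (3·P_n(y/3) − 4·P_n(y/3)³)| ≤ 4·( |y|^{3n+3}/[3^{n+1}(n+1)!]³ + |y|^{2n+3}/[3^{n+1}(n+1)!]² ) + ((4/3)·y² + 3)·|y|^{n+1}/(3^{n+1}(n+1)!). -/

import Mathlib

/-!
With `x = y / 3`, `sin y = 3 sin x - 4 sin x ^ 3`, so the error of the approximation comes only from
replacing `sin x` by its Taylor polynomial. If that replacement costs at most `ε`, then, as
`|sin x| ≤ |x|`, it changes the cube by at most `(|x| + ε) ^ 3 - |x| ^ 3`, and the whole expression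
by at most `3 ε + 4 ((|x| + ε) ^ 3 - |x| ^ 3)`. For `ε = |x| ^ (n + 1) / (n + 1)!`, the Lagrange
remainder bound, expanding the cube gives the estimate.
-/

open Real

/-- Taylor polynomial of sine: `P n y = ∑_{m=0}^{⌊(n-1)/2⌋} (-1)^m y^(2m+1)/(2m+1)!`
(empty sum when `n = 0`). -/
noncomputable def sinTaylor (n : ℕ) (y : ℝ) : ℝ :=
  ∑ m ∈ Finset.range ((n + 1) / 2),
    (-1 : ℝ) ^ m * y ^ (2 * m + 1) / (Nat.factorial (2 * m + 1))

lemma norm_pow_sub_pow_le_of_norm_sub_le {R : Type*} [SeminormedRing R] [NormOneClass R] {a b : R}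
    {r ε : ℝ} (ha : ‖a‖ ≤ r) (hab : ‖a - b‖ ≤ ε) (n : ℕ) :
    ‖a ^ n - b ^ n‖ ≤ (r + ε) ^ n - r ^ n := by
  have hr : 0 ≤ r := (norm_nonneg a).trans ha
  have hε : 0 ≤ ε := (norm_nonneg _).trans hab
  have hb : ‖b‖ ≤ r + ε := (norm_le_norm_add_norm_sub a b).trans (add_le_add ha hab)
  induction n with
  | zero => simp
  | succ n ih =>
    calc ‖a ^ (n + 1) - b ^ (n + 1)‖ = ‖a * (a ^ n - b ^ n) + (a - b) * b ^ n‖ := by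
          rw [pow_succ' a, pow_succ' b]
          congr 1
          noncomm_ring
      _ ≤ ‖a‖ * ‖a ^ n - b ^ n‖ + ‖a - b‖ * ‖b‖ ^ n :=
          norm_add_le_of_le (norm_mul_le _ _) (norm_mul_le_of_le le_rfl (norm_pow_le b n))
      _ ≤ r * ((r + ε) ^ n - r ^ n) + ε * (r + ε) ^ n := by gcongr
      _ = (r + ε) ^ (n + 1) - r ^ (n + 1) := by ring

lemma sum_range_eq_sum_range_odd {M : Type*} [AddCommMonoid M] {f : ℕ → M}
    (hf : ∀ m, f (2 * m) = 0) (n : ℕ) :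
    ∑ k ∈ Finset.range n, f k = ∑ m ∈ Finset.range (n / 2), f (2 * m + 1) := by
  induction n with
  | zero => simp
  | succ n ih =>
    rw [Finset.sum_range_succ, ih]
    obtain ⟨m, rfl | rfl⟩ := n.even_or_odd'
    · rw [hf, add_zero, show (2 * m + 1) / 2 = 2 * m / 2 by lia]
    · rw [show (2 * m + 1 + 1) / 2 = (2 * m + 1) / 2 + 1 by lia, Finset.sum_range_succ,
        show (2 * m + 1) / 2 = m by lia]

lemma taylorWithinEval_eq_taylorWithinEval_univ {E : Type*} [NormedAddCommGroup E]
    [NormedSpace ℝ E] {f : ℝ → E} {n : ℕ} {s : Set ℝ} {x₀ : ℝ} (hs : UniqueDiffOn ℝ s)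
    (hf : ContDiffAt ℝ n f x₀) (hx₀ : x₀ ∈ s) (x : ℝ) :
    taylorWithinEval f n s x₀ x = taylorWithinEval f n Set.univ x₀ x := by
  simp only [taylor_within_apply, iteratedDerivWithin_univ]
  refine Finset.sum_congr rfl fun k hk ↦ ?_
  have hkn : k ≤ n := Finset.mem_range_succ_iff.mp hk
  rw [iteratedDerivWithin_eq_iteratedDeriv hs (hf.of_le (mod_cast hkn)) hx₀]

lemma abs_sub_taylorWithinEval_univ_le {f : ℝ → ℝ} {n : ℕ} {x₀ x C : ℝ}
    (hf : ContDiff ℝ (n + 1) f) (hC : ∀ t ∈ Set.uIoo x₀ x, |iteratedDeriv (n + 1) f t| ≤ C) :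
    |f x - taylorWithinEval f n Set.univ x₀ x| ≤ C * |x - x₀| ^ (n + 1) / (n + 1).factorial := by
  rcases eq_or_ne x₀ x with rfl | hx
  · simp
  · obtain ⟨t, ht, hrem⟩ := taylor_mean_remainder_lagrange_iteratedDeriv hx hf.contDiffOn
    rw [taylorWithinEval_eq_taylorWithinEval_univ (uniqueDiffOn_uIcc hx)
      (hf.contDiffAt.of_le (by norm_num)) Set.left_mem_uIcc] at hrem
    rw [hrem, abs_div, abs_mul, abs_pow, Nat.abs_cast]
    gcongr
    exact hC t ht

lemma taylorWithinEval_sin_univ_zero (n : ℕ) (x : ℝ) :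
    taylorWithinEval sin n Set.univ 0 x = sinTaylor n x := by
  simp only [taylor_within_apply, iteratedDerivWithin_univ, sub_zero, smul_eq_mul]
  rw [sum_range_eq_sum_range_odd (by simp), sinTaylor]
  refine Finset.sum_congr rfl fun m _ ↦ ?_
  rw [iteratedDeriv_odd_sin]
  simp only [Pi.mul_apply, Pi.pow_apply, Pi.neg_apply, Pi.one_apply, cos_zero]
  ring

lemma abs_sin_sub_sinTaylor_le (n : ℕ) (x : ℝ) :
    |sin x - sinTaylor n x| ≤ |x| ^ (n + 1) / (n + 1).factorial := by
  simpa [taylorWithinEval_sin_univ_zero] using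
    abs_sub_taylorWithinEval_univ_le (x₀ := 0) (x := x) contDiff_sin
      fun t _ ↦ abs_iteratedDeriv_sin_le_one (n + 1) t

lemma abs_sin_three_mul_sub_le {x p ε : ℝ} (h : |sin x - p| ≤ ε) :
    |sin (3 * x) - (3 * p - 4 * p ^ 3)| ≤ 3 * ε + 4 * ((|x| + ε) ^ 3 - |x| ^ 3) := by
  have hcube : |sin x ^ 3 - p ^ 3| ≤ (|x| + ε) ^ 3 - |x| ^ 3 :=
    norm_pow_sub_pow_le_of_norm_sub_le (R := ℝ) abs_sin_le_abs h 3
  calc |sin (3 * x) - (3 * p - 4 * p ^ 3)| = |3 * (sin x - p) - 4 * (sin x ^ 3 - p ^ 3)| := by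
        rw [sin_three_mul]
        ring_nf
    _ ≤ 3 * |sin x - p| + 4 * |sin x ^ 3 - p ^ 3| := by
        refine (abs_sub _ _).trans_eq ?_
        rw [abs_mul, abs_mul, Nat.abs_ofNat, Nat.abs_ofNat]
    _ ≤ 3 * ε + 4 * ((|x| + ε) ^ 3 - |x| ^ 3) := by gcongr

theorem sin_triple_angle_approx_error (y : ℝ) (n : ℕ) :
    |Real.sin y - (3 * sinTaylor n (y / 3) - 4 * (sinTaylor n (y / 3)) ^ 3)| ≤
      4 * (|y| ^ (3 * n + 3) / ((3 : ℝ) ^ (n + 1) * (Nat.factorial (n + 1))) ^ 3 +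
           |y| ^ (2 * n + 3) / ((3 : ℝ) ^ (n + 1) * (Nat.factorial (n + 1))) ^ 2) +
      ((4 / 3) * y ^ 2 + 3) * |y| ^ (n + 1) / ((3 : ℝ) ^ (n + 1) * (Nat.factorial (n + 1))) := by
  have htaylor : |sin (y / 3) - sinTaylor n (y / 3)| ≤
      |y| ^ (n + 1) / ((3 : ℝ) ^ (n + 1) * (n + 1).factorial) := by
    simpa only [abs_div, Nat.abs_ofNat, div_pow, div_div] using abs_sin_sub_sinTaylor_le n (y / 3)
  have herror := abs_sin_three_mul_sub_le htaylor
  rw [mul_div_cancel₀ y three_ne_zero, abs_div, Nat.abs_ofNat] at herror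
  refine herror.trans_eq ?_
  rw [← sq_abs y]
  ring
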